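/- z''(1/2) = Γ(1/4)^2 / (2π^{3/2}) and z'''(1/2) = 36√π / Γ(1/4)^2, where z(x) = ₂F₁(1/2, 1/2; 1; x). -/

import Mathlib

/-- Ascending Pochhammer symbol `(a)_n = a(a+1)⋯(a+n-1)`. -/
noncomputable def poch (a : ℝ) (n : ℕ) : ℝ := ∏ i ∈ Finset.range n, (a + i)

/-- Gaussian hypergeometric series `₂F₁(a,b;c;x)`. -/
noncomputable def hypF (a b c x : ℝ) : ℝ :=
  ∑' m : ℕ, poch a m * poch b m / poch c m * x ^ m / m.factorial


open Real Set Filter Topology MeasureTheory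

lemma hs_congr {f g : ℕ → ℝ} {a b : ℝ} (h : HasSum f a) (hf : ∀ n, g n = f n) (hab : b = a) :
    HasSum g b := by
  rw [hab, show g = f from funext hf]; exact h

noncomputable def wA (n : ℕ) : ℝ := poch (1/2) n / n.factorial

lemma wA_zero : wA 0 = 1 := by simp [wA, poch]

lemma wA_succ (n : ℕ) : wA (n+1) = wA n * ((2*n+1)/(2*n+2)) := by
  have h : (n.factorial : ℝ) ≠ 0 := by positivity
  have h2 : (n : ℝ) + 1 ≠ 0 := by positivity
  simp only [wA, poch, Finset.prod_range_succ, Nat.factorial_succ]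
  push_cast
  field_simp
  ring

lemma wA_pos (n : ℕ) : 0 < wA n := by
  induction n with
  | zero => simp [wA_zero]
  | succ n ih => rw [wA_succ]; positivity

lemma wA_le (n : ℕ) : wA n ≤ 1 := by
  induction n with
  | zero => simp [wA_zero]
  | succ n ih =>
    rw [wA_succ]
    have : ((2*n+1)/(2*n+2) : ℝ) ≤ 1 := by
      rw [div_le_one (by positivity)]; linarith
    exact mul_le_one₀ ih (by positivity) this

lemma poch_one (n : ℕ) : poch 1 n = n.factorial := by
  induction n with
  | zero => simp [poch]
  | succ n ih =>
    rw [poch, Finset.prod_range_succ, ← poch, ih, Nat.factorial_succ]; push_cast; ring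

lemma hyp_eq (x : ℝ) : hypF (1/2) (1/2) 1 x = ∑' n : ℕ, wA n ^ 2 * (n.descFactorial 0 : ℕ) * x ^ (n - 0) := by
  unfold hypF
  refine tsum_congr fun n => ?_
  have h : (n.factorial : ℝ) ≠ 0 := by positivity
  rw [poch_one, wA]
  simp
  field_simp

noncomputable def wF (k : ℕ) (x : ℝ) : ℝ := ∑' n : ℕ, wA n ^ 2 * (n.descFactorial k : ℕ) * x ^ (n - k)

lemma wbound (k n : ℕ) (y : ℝ) (hy : |y| < 3/4) :
    ‖wA n ^ 2 * (n.descFactorial k : ℕ) * y ^ (n - k)‖ ≤ ((n:ℝ)^k * (3/4)^n) * ((3/4:ℝ)^k)⁻¹ := by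
  rw [norm_mul, norm_mul, norm_pow, norm_pow, Real.norm_eq_abs, Real.norm_eq_abs, Real.norm_eq_abs,
    abs_of_pos (wA_pos n), Nat.abs_cast]
  have h1 : wA n ^ 2 ≤ 1 := pow_le_one₀ (wA_pos n).le (wA_le n)
  have h2 : ((n.descFactorial k : ℕ) : ℝ) ≤ (n:ℝ)^k := by exact_mod_cast Nat.descFactorial_le_pow n k
  have h3 : |y| ^ (n-k) ≤ (3/4:ℝ)^(n-k) := pow_le_pow_left₀ (abs_nonneg _) hy.le _
  have h4 : (3/4:ℝ)^(n-k) ≤ (3/4)^n * ((3/4:ℝ)^k)⁻¹ := by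
    rw [← div_eq_mul_inv, le_div_iff₀ (by positivity), ← pow_add]
    exact pow_le_pow_of_le_one (by norm_num) (by norm_num) (by omega)
  calc _ ≤ 1 * (n:ℝ)^k * ((3/4)^n * ((3/4:ℝ)^k)⁻¹) := by
        gcongr
        exact h3.trans h4
    _ = _ := by ring

lemma wsumm_bound (k : ℕ) : Summable fun n : ℕ => ((n:ℝ)^k * (3/4)^n) * ((3/4:ℝ)^k)⁻¹ :=
  (summable_pow_mul_geometric_of_norm_lt_one k (by norm_num : ‖(3/4:ℝ)‖ < 1)).mul_right _

lemma wsumm (k : ℕ) (y : ℝ) (hy : |y| < 3/4) :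
    Summable fun n : ℕ => wA n ^ 2 * (n.descFactorial k : ℕ) * y ^ (n - k) :=
  .of_norm_bounded (wsumm_bound k) fun n => wbound k n y hy

lemma wF_deriv (k : ℕ) (x : ℝ) (hx : |x| < 3/4) : HasDerivAt (wF k) (wF (k+1) x) x := by
  unfold wF
  refine hasDerivAt_tsum_of_isPreconnected (t := Metric.ball (0:ℝ) (3/4)) (y₀ := 0)
    (g := fun (n : ℕ) (x : ℝ) => wA n ^ 2 * (n.descFactorial k : ℕ) * x ^ (n - k))
    (g' := fun (n : ℕ) (x : ℝ) => wA n ^ 2 * (n.descFactorial (k+1) : ℕ) * x ^ (n - (k+1)))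
    (wsumm_bound (k+1)) Metric.isOpen_ball (convex_ball _ _).isPreconnected ?_ ?_ (by simp)
    (wsumm k 0 (by norm_num)) (by simpa using hx)
  · intro n y _
    have := ((hasDerivAt_pow (n-k) y).const_mul (wA n ^ 2 * (n.descFactorial k : ℕ)))
    refine this.congr_deriv ?_
    rw [Nat.descFactorial_succ, Nat.sub_sub]
    push_cast
    ring
  · intro n y hy
    exact wbound (k+1) n y (by simpa using hy)

lemma wF_iter (k : ℕ) : ∀ x : ℝ, |x| < 3/4 → iteratedDeriv k (fun t => hypF (1/2) (1/2) 1 t) x = wF k x := by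
  induction k with
  | zero => intro x _; rw [iteratedDeriv_zero, hyp_eq, wF]
  | succ k ih =>
    intro x hx
    rw [iteratedDeriv_succ]
    have : iteratedDeriv k (fun t => hypF (1/2) (1/2) 1 t) =ᶠ[𝓝 x] wF k := by
      have h : ∀ᶠ y in 𝓝 x, |y| < 3/4 := (continuous_abs.tendsto x).eventually_lt_const hx
      filter_upwards [h] with y hy using ih y hy
    rw [this.deriv_eq, (wF_deriv k x hx).deriv]

lemma wsum_half (k : ℕ) :
    HasSum (fun n : ℕ => wA n ^ 2 * (1/2)^n * ((n.descFactorial k : ℕ) * 2^k)) (wF k (1/2)) := by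
  have h := (wsumm k (1/2) (by rw [abs_of_pos] <;> norm_num)).hasSum
  refine hs_congr h (fun n => ?_) rfl
  rcases le_or_gt k n with hk | hk
  · have : (1/2:ℝ)^n = (1/2)^(n-k) * (1/2)^k := by rw [← pow_add]; congr 1; omega
    rw [this]
    have h2 : (1/2:ℝ)^k * 2^k = 1 := by rw [← mul_pow]; norm_num
    linear_combination (wA n ^ 2 * (1/2)^(n-k) * (n.descFactorial k : ℕ)) * h2
  · simp [Nat.descFactorial_eq_zero_iff_lt.2 hk]

/-- telescoping -/
lemma wtel (c : ℕ → ℝ) (C : ℝ) (hc : ∀ n, |c n| ≤ C * (n:ℝ)^3) :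
    Tendsto (fun n => ∑ i ∈ Finset.range n, wA i ^ 2 * (1/2)^i * (c (i+1) * (2*i+1)^2/(2*(2*i+2)^2) - c i))
      atTop (𝓝 0) := by
  have h0 : c 0 = 0 := by simpa using hc 0
  have key : ∀ n, ∑ i ∈ Finset.range n, wA i ^ 2 * (1/2)^i * (c (i+1) * (2*i+1)^2/(2*(2*i+2)^2) - c i)
      = c n * (wA n ^ 2 * (1/2)^n) := by
    intro n
    have := Finset.sum_range_sub (fun n => c n * (wA n ^ 2 * (1/2)^n)) n
    simp only [h0, zero_mul, sub_zero] at this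
    rw [← this]
    refine Finset.sum_congr rfl fun i _ => ?_
    rw [wA_succ, pow_succ]
    field_simp
    ring
  simp_rw [key]
  have hs : Tendsto (fun n : ℕ => C * ((n:ℝ)^3 * (1/2)^n)) atTop (𝓝 0) := by
    simpa using (summable_pow_mul_geometric_of_norm_lt_one 3
      (by norm_num : ‖(1/2:ℝ)‖ < 1)).tendsto_atTop_zero.const_mul C
  refine squeeze_zero_norm (fun n => ?_) hs
  have h1 : wA n ^ 2 ≤ 1 := pow_le_one₀ (wA_pos n).le (wA_le n)
  rw [Real.norm_eq_abs, abs_mul, abs_of_nonneg (by positivity : 0 ≤ wA n ^ 2 * (1/2)^n)]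
  calc |c n| * (wA n ^ 2 * (1/2)^n) ≤ (C * (n:ℝ)^3) * (1 * (1/2)^n) := by
        have := (abs_nonneg _).trans (hc n)
        gcongr
        exact hc n
    _ = _ := by ring

lemma wtel_eq (c : ℕ → ℝ) (C : ℝ) (hc : ∀ n, |c n| ≤ C * (n:ℝ)^3) (p q : ℕ → ℝ) (P Q : ℝ)
    (hp : HasSum (fun n => wA n ^ 2 * (1/2)^n * p n) P)
    (hq : HasSum (fun n => wA n ^ 2 * (1/2)^n * q n) Q)
    (h : ∀ n : ℕ, c (n+1) * (2*n+1)^2/(2*(2*n+2)^2) - c n = p n - q n) : P = Q := by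
  have h1 := (hp.sub hq).tendsto_sum_nat
  have h2 := wtel c C hc
  simp_rw [h] at h2
  simp_rw [← mul_sub] at h1
  have := tendsto_nhds_unique h1 h2
  linarith

lemma pow_le_cube (n k : ℕ) (hk : 1 ≤ k) (hk3 : k ≤ 3) : (n:ℝ)^k ≤ (n:ℝ)^3 := by
  rcases Nat.eq_zero_or_pos n with rfl | hn
  · simp [show k ≠ 0 by omega]
  · exact pow_le_pow_right₀ (by exact_mod_cast hn) hk3

lemma desc2 (n : ℕ) : ((n.descFactorial 2 : ℕ) : ℝ) = n * (n-1) := by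
  rcases n with _ | n
  · simp
  · simp [Nat.descFactorial_succ]; ring

lemma desc3 (n : ℕ) : ((n.descFactorial 3 : ℕ) : ℝ) = n * (n-1) * (n-2) := by
  rcases n with _ | _ | n
  · simp
  · simp
  · simp [Nat.descFactorial_succ]; ring

lemma wF2 : wF 2 (1/2) = wF 0 (1/2) := by
  refine wtel_eq (fun n => -8 * (n:ℝ)^2) 8 ?_ _ _ _ _ (wsum_half 2) (wsum_half 0) ?_
  · intro n
    rw [abs_mul, abs_of_nonneg (by positivity : (0:ℝ) ≤ (n:ℝ)^2)]
    norm_num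
    exact pow_le_cube n 2 (by norm_num) (by norm_num)
  · intro n
    rw [desc2]; simp; field_simp; ring

lemma wF3 : wF 3 (1/2) = 9 * wF 1 (1/2) := by
  have h9 : HasSum (fun n : ℕ => wA n ^ 2 * (1/2)^n * (9 * (2 * n))) (9 * wF 1 (1/2)) := by
    refine hs_congr ((wsum_half 1).mul_left 9) (fun n => ?_) rfl
    simp; ring
  refine wtel_eq (fun n => (-16) * (n:ℝ)^3 + 16 * (n:ℝ)^2) 32 ?_ _ _ _ _ (wsum_half 3) h9 ?_
  · intro n
    have := pow_le_cube n 2 (by norm_num) (by norm_num)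
    have : (0:ℝ) ≤ (n:ℝ)^2 := by positivity
    rw [abs_le]
    constructor <;> nlinarith
  · intro n
    rw [desc3]; simp; field_simp; ring

lemma wF1 (L : ℝ) (hL : HasSum (fun n : ℕ => wA n ^ 2 * (1/2)^n * (1/(2*n+2))) L) :
    wF 1 (1/2) = L := by
  refine wtel_eq (fun n => (-4) * (n:ℝ)) 4 ?_ _ _ _ _ (wsum_half 1) hL ?_
  · intro n
    rw [abs_mul, Nat.abs_cast]
    have := pow_le_cube n 1 (by norm_num) (by norm_num)
    norm_num at this ⊢
    exact this
  · intro n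
    simp; field_simp; ring

lemma wA_binom (y : ℝ) (hy : |y| < 1) : HasSum (fun n => wA n * y ^ n) (1 / (1-y)^(1/2:ℝ)) := by
  have h := (Real.one_div_one_sub_rpow_hasFPowerSeriesOnBall_zero (1/2)).hasSum (y := y)
    (by
      rw [← ENNReal.ofReal_one, Metric.eball_ofReal]
      simpa using hy)
  simp only [zero_add] at h
  refine hs_congr h (fun n => ?_) rfl
  simp only [FormalMultilinearSeries.ofScalars_apply_eq, smul_eq_mul]
  congr 1
  rw [← Ring.multichoose_eq]
  have := Ring.factorial_nsmul_multichoose_eq_ascPochhammer (1/2:ℝ) n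
  have h2 : ∀ n, (ascPochhammer ℕ n).smeval (1/2:ℝ) = poch (1/2) n := by
    intro n
    induction n with
    | zero => simp [poch]
    | succ n ih =>
      rw [ascPochhammer_succ_right, Polynomial.smeval_mul, ih, poch, poch, Finset.prod_range_succ]
      simp [Polynomial.smeval_add, Polynomial.smeval_X, Polynomial.smeval_natCast]
  rw [h2, nsmul_eq_mul] at this
  rw [wA, ← this]
  have h : (n.factorial : ℝ) ≠ 0 := by positivity
  field_simp

lemma wsin (n : ℕ) : ∫ x in (0:ℝ)..(π/2), sin x ^ (2*n) = π/2 * wA n := by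
  induction n with
  | zero => simp [wA_zero]
  | succ n ih =>
    rw [show 2*(n+1) = 2*n+2 by ring, integral_sin_pow, ih, wA_succ]
    simp
    ring

lemma wsincos (n : ℕ) : ∫ x in (0:ℝ)..(π/2), sin x ^ (2*n) * cos x ^ 2 = π/2 * (wA n * (1/(2*n+2))) := by
  have : ∀ x : ℝ, sin x ^ (2*n) * cos x ^ 2 = sin x ^ (2*n) - sin x ^ (2*(n+1)) := by
    intro x; rw [cos_sq']; ring
  simp_rw [this]
  rw [intervalIntegral.integral_sub (by apply Continuous.intervalIntegrable; fun_prop)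
    (by apply Continuous.intervalIntegrable; fun_prop), wsin, wsin, wA_succ]
  field_simp
  ring

lemma wswap (g : ℝ → ℝ) (hg : Continuous g) (hb : ∀ x, |g x| ≤ 1) :
    HasSum (fun n : ℕ => wA n * (1/2)^n * ∫ x in (0:ℝ)..(π/2), sin x ^ (2*n) * g x)
      (∫ x in (0:ℝ)..(π/2), √2 * (g x / √(1 + cos x ^ 2))) := by
  have h := intervalIntegral.hasSum_integral_of_dominated_convergence (μ := volume)
    (a := 0) (b := π/2)
    (F := fun (n : ℕ) x => wA n * (1/2)^n * (sin x ^ (2*n) * g x))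
    (f := fun x => √2 * (g x / √(1 + cos x ^ 2)))
    (fun n _ => (1/2:ℝ)^n) ?_ ?_ ?_ ?_ ?_
  · simpa only [intervalIntegral.integral_const_mul] using h
  · intro n
    apply Continuous.aestronglyMeasurable; fun_prop
  · intro n
    refine Eventually.of_forall fun x _ => ?_
    rw [norm_mul, norm_mul, norm_mul, Real.norm_eq_abs, Real.norm_eq_abs, Real.norm_eq_abs, Real.norm_eq_abs,
      abs_of_pos (wA_pos n), abs_of_pos (by positivity : (0:ℝ) < (1/2)^n), abs_pow]
    have h1 : |sin x| ^ (2*n) ≤ 1 := pow_le_one₀ (abs_nonneg _) (abs_sin_le_one x)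
    calc _ ≤ 1 * (1/2:ℝ)^n * (1 * 1) := by
          gcongr
          · exact wA_le n
          · exact hb x
      _ = _ := by ring
  · exact Eventually.of_forall fun x _ => summable_geometric_of_lt_one (by norm_num) (by norm_num)
  · exact intervalIntegrable_const
  · refine Eventually.of_forall fun x _ => ?_
    have hs : sin x ^ 2 / 2 < 1 := by nlinarith [sin_sq_le_one x]
    have := (wA_binom (sin x ^ 2 / 2) (by rw [abs_of_nonneg (by positivity)]; exact hs)).mul_right (g x)
    refine hs_congr this (fun n => ?_) ?_
    · rw [pow_mul, div_pow, div_pow]; ring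
    · rw [← Real.sqrt_eq_rpow]
      have : 1 - sin x ^ 2 / 2 = (1 + cos x ^ 2) / 2 := by rw [cos_sq']; ring
      rw [this, Real.sqrt_div (by positivity)]
      field_simp

lemma wbeta (a b : ℝ) (ha : 0 < a) (hb : 0 < b) :
    ∫ x in Ioo (0:ℝ) 1, x ^ (a-1) * (1-x)^(b-1) = Gamma a * Gamma b / Gamma (a+b) := by
  have h := ProbabilityTheory.beta_eq_betaIntegralReal a b ha hb
  rw [ProbabilityTheory.beta] at h
  rw [h, Complex.betaIntegral]
  have : ∫ x in (0:ℝ)..1, (x:ℂ)^((a:ℂ)-1) * (1-(x:ℂ))^((b:ℂ)-1) =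
      ∫ x in (0:ℝ)..1, ((x ^ (a-1) * (1-x)^(b-1) : ℝ) : ℂ) := by
    refine intervalIntegral.integral_congr fun x hx => ?_
    rw [uIcc_of_le zero_le_one] at hx
    rw [Complex.ofReal_mul, Complex.ofReal_cpow hx.1, Complex.ofReal_cpow (by linarith [hx.2])]
    push_cast
    rfl
  rw [this, intervalIntegral.integral_ofReal, Complex.ofReal_re,
    intervalIntegral.integral_of_le zero_le_one, integral_Ioc_eq_integral_Ioo]

lemma wimage : (fun x => cos x ^ 4) '' Ioo 0 (π/2) = Ioo (0:ℝ) 1 := by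
  ext u
  constructor
  · rintro ⟨x, hx, rfl⟩
    have h1 : 0 < cos x := cos_pos_of_mem_Ioo ⟨by linarith [hx.1, pi_pos], hx.2⟩
    have h2 : 0 < sin x := sin_pos_of_mem_Ioo ⟨hx.1, by linarith [hx.2, pi_pos]⟩
    have h3 : cos x < 1 := by nlinarith [sin_sq_add_cos_sq x]
    exact ⟨by positivity, pow_lt_one₀ h1.le h3 (by norm_num)⟩
  · rintro ⟨h0, h1⟩
    refine ⟨arccos (√(√u)), ⟨?_, ?_⟩, ?_⟩
    · rw [arccos_pos, Real.sqrt_lt' one_pos, Real.sqrt_lt' (by norm_num)]; linarith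
    · rw [arccos_lt_pi_div_two]; positivity
    · have : √(√u) ≤ 1 := by
        rw [Real.sqrt_le_one, Real.sqrt_le_one]; exact h1.le
      simp only
      rw [cos_arccos (by linarith [Real.sqrt_nonneg (√u)]) this]
      rw [show 4 = 2 * 2 by norm_num, pow_mul, Real.sq_sqrt (by positivity), Real.sq_sqrt h0.le]

lemma wint (k : ℕ) :
    ∫ x in (0:ℝ)..(π/2), cos x ^ (2*k) / √(1 + cos x ^ 2) =
      Gamma ((2*k+1)/4) * √π / Gamma ((2*k+1)/4 + 1/2) / 4 := by
  have hb := wbeta ((2*k+1)/4) (1/2) (by positivity) (by norm_num)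
  rw [← wimage, integral_image_eq_integral_abs_deriv_smul measurableSet_Ioo
    (f' := fun x => 4 * cos x ^ 3 * (- sin x)) ?_ ?_] at hb
  · rw [Gamma_one_half_eq] at hb
    rw [← hb, eq_div_iff (by norm_num), intervalIntegral.integral_of_le (by positivity),
      integral_Ioc_eq_integral_Ioo, ← integral_mul_const]
    refine setIntegral_congr_fun measurableSet_Ioo fun x hx => ?_
    have h1 : 0 < cos x := cos_pos_of_mem_Ioo ⟨by linarith [hx.1, pi_pos], hx.2⟩
    have h2 : 0 < sin x := sin_pos_of_mem_Ioo ⟨hx.1, by linarith [hx.2, pi_pos]⟩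
    have e1 : |4 * cos x ^ 3 * (- sin x)| = 4 * cos x ^ 3 * sin x := by
      rw [mul_neg, abs_neg, abs_of_pos (by positivity)]
    have e2 : (cos x ^ 4) ^ (((2*k+1)/4 : ℝ) - 1) = cos x ^ (2*k) / cos x ^ 3 := by
      rw [← rpow_natCast, ← rpow_mul h1.le, ← rpow_natCast, ← rpow_natCast, ← rpow_sub h1]
      congr 1; push_cast; ring
    have e3 : (1 - cos x ^ 4) ^ ((1/2 : ℝ) - 1) = 1 / (sin x * √(1 + cos x ^ 2)) := by
      have : 1 - cos x ^ 4 = sin x ^ 2 * (1 + cos x ^ 2) := by rw [sin_sq]; ring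
      rw [this, show (1/2:ℝ) - 1 = -(1/2) by norm_num, rpow_neg (by positivity), ← Real.sqrt_eq_rpow,
        Real.sqrt_mul (by positivity), Real.sqrt_sq h2.le, one_div]
    simp only [smul_eq_mul]
    rw [e1, e2, e3]
    field_simp
  · intro x _
    have := ((hasDerivAt_cos x).pow 4).hasDerivWithinAt (s := Ioo 0 (π/2))
    exact this.congr_deriv (by norm_num)
  · intro x hx y hy h
    have h1 : 0 < cos x := cos_pos_of_mem_Ioo ⟨by linarith [hx.1, pi_pos], hx.2⟩
    have h2 : 0 < cos y := cos_pos_of_mem_Ioo ⟨by linarith [hy.1, pi_pos], hy.2⟩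
    have := (pow_left_inj₀ h1.le h2.le (by norm_num : 4 ≠ 0)).1 h
    exact injOn_cos ⟨hx.1.le, by linarith [hx.2, pi_pos]⟩ ⟨hy.1.le, by linarith [hy.2, pi_pos]⟩ this

lemma wrefl : Gamma (1/4) * Gamma (3/4) = π * √2 := by
  have h := Real.Gamma_mul_Gamma_one_sub (1/4)
  rw [show (1:ℝ) - 1/4 = 3/4 by norm_num, show π * (1/4) = π/4 by ring, sin_pi_div_four] at h
  rw [h]
  have := Real.sq_sqrt (show (0:ℝ) ≤ 2 by norm_num)
  field_simp
  linarith

lemma wF0_val : wF 0 (1/2) = Gamma (1/4) ^ 2 / (2 * π ^ ((3:ℝ)/2)) := by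
  have h := wswap (fun _ => 1) continuous_const (by simp)
  simp only [mul_one, wsin] at h
  rw [intervalIntegral.integral_const_mul] at h
  have hi := wint 0
  simp only [mul_zero, pow_zero, Nat.cast_zero, zero_add] at hi
  rw [hi, show (1/4:ℝ) + 1/2 = 3/4 by norm_num] at h
  have h0 := (wsum_half 0).mul_left (π/2)
  have := h0.unique (hs_congr h (fun n => by simp; ring) rfl)
  have hg : 0 < Gamma (1/4) := Gamma_pos_of_pos (by norm_num)
  have hg' : 0 < Gamma (3/4) := Gamma_pos_of_pos (by norm_num)
  have hp : π ^ ((3:ℝ)/2) = π * √π := by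
    rw [show (3:ℝ)/2 = 1 + 1/2 by norm_num, rpow_add pi_pos, rpow_one, ← Real.sqrt_eq_rpow]
  have e : Gamma (3/4) = π * √2 / Gamma (1/4) := by rw [← wrefl]; field_simp
  have hs := Real.sq_sqrt pi_pos.le
  have hpos := pi_pos
  have hsp := Real.sqrt_pos.2 pi_pos
  rw [hp]
  rw [e] at this
  have h2 : wF 0 (1/2) = 2/π * (π/2 * wF 0 (1/2)) := by field_simp
  rw [h2, this]
  field_simp
  rw [hs]; ring

lemma wF1_val : wF 1 (1/2) = 4 * √π / Gamma (1/4) ^ 2 := by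
  have h := wswap (fun x => cos x ^ 2) (by fun_prop)
    (fun x => by rw [abs_of_nonneg (by positivity)]; exact cos_sq_le_one x)
  simp only [wsincos] at h
  rw [intervalIntegral.integral_const_mul] at h
  have hi := wint 1
  norm_num at hi
  rw [hi] at h
  have hg : 0 < Gamma (1/4) := Gamma_pos_of_pos (by norm_num)
  have e5 : Gamma (5/4) = 1/4 * Gamma (1/4) := by
    rw [← Gamma_add_one (by norm_num)]; norm_num
  have e : Gamma (3/4) = π * √2 / Gamma (1/4) := by rw [← wrefl]; field_simp
  have h2 := h.mul_left (2/π)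
  have hpos := pi_pos
  rw [wF1 _ (hs_congr h2 (fun n => by field_simp) rfl), e, e5]
  have := Real.sq_sqrt (show (0:ℝ) ≤ 2 by norm_num)
  field_simp
  rw [this]; ring

theorem z''_and_z'''_at_half :
    iteratedDeriv 2 (fun t => hypF (1/2) (1/2) 1 t) (1/2)
        = Real.Gamma (1/4) ^ 2 / (2 * Real.pi ^ ((3 : ℝ)/2)) ∧
    iteratedDeriv 3 (fun t => hypF (1/2) (1/2) 1 t) (1/2)
        = 36 * Real.sqrt Real.pi / Real.Gamma (1/4) ^ 2 := by
  have hh : |(1/2:ℝ)| < 3/4 := by rw [abs_of_pos] <;> norm_num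
  rw [wF_iter 2 _ hh, wF_iter 3 _ hh, wF2, wF3, wF0_val, wF1_val]
  exact ⟨rfl, by ring⟩
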